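/- arXiv:1109.5206 — 8 statements merged into one kernel-verified Lean document; each statement's English description precedes it below -/
import Mathlib

section
/- Let f : ℝ → ℝ satisfy condition (R) and be log convex. Then for every ε > 0 there exists μ with 0 < μ < 1 such that μ² · ( f(t/μ) + ε ) ≥ f(t) + ε/2 for all t ≥ 0. -/
/-!
Write `g = log f`, so that `g` is convex with `g 0 = 0` and hence `g t ≤ μ * g (t / μ)` for
`0 < μ < 1`; that is, `f (t / μ) ≥ exp (g t / μ)`. Where `g t ≥ 2`, the inequality
`exp (1 / μ - 1) ≥ 1 / μ` already yields `μ² * f (t / μ) ≥ f t`. Where `g t < 2`, monotonicity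
gives `μ² * f (t / μ) ≥ f t - (1 - μ²) * exp 2`, and the loss is absorbed by `ε / 2` once
`μ² = (ε / 2 + exp 2) / (ε + exp 2)`.
-/

/-- `exp (x / μ)` dominates `exp x / μ²` as soon as `x ≥ 2`. -/
lemma exp_le_sq_mul_exp_div {μ x : ℝ} (hμ : 0 < μ) (hμ1 : μ < 1) (hx : 2 ≤ x) :
    Real.exp x ≤ μ ^ 2 * Real.exp (x / μ) := by
  have hs : 0 ≤ 1 / μ - 1 := by
    rw [sub_nonneg, le_div_iff₀ hμ]
    linarith
  have h1 : 1 / μ ≤ Real.exp (1 / μ - 1) := by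
    linarith [Real.add_one_le_exp (1 / μ - 1)]
  have h2 : (1 / μ) ^ 2 ≤ Real.exp ((1 / μ - 1) * x) := by
    calc (1 / μ) ^ 2 ≤ Real.exp (1 / μ - 1) ^ 2 := by gcongr
      _ = Real.exp ((1 / μ - 1) * 2) := by
        rw [← Real.exp_nat_mul]
        congr 1
        push_cast
        ring
      _ ≤ Real.exp ((1 / μ - 1) * x) := by gcongr
  have h3 : Real.exp (x / μ) = Real.exp ((1 / μ - 1) * x) * Real.exp x := by
    rw [← Real.exp_add]
    congr 1
    ring
  calc Real.exp x = μ ^ 2 * ((1 / μ) ^ 2 * Real.exp x) := by field_simp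
    _ ≤ μ ^ 2 * (Real.exp ((1 / μ - 1) * x) * Real.exp x) := by gcongr
    _ = μ ^ 2 * Real.exp (x / μ) := by rw [h3]

/-- Condition (R): `f` is smooth, positive on all of `ℝ`, increasing, convex,
`f 0 = 1`, and superlinear at `∞`.  If in addition `f` is log convex, then for
every `ε > 0` there exists `0 < μ < 1` such that
`μ² * (f (t/μ) + ε) ≥ f t + ε/2` for all `t ≥ 0`. -/
theorem stmt_0 (f : ℝ → ℝ)
    (hsmooth : ContDiff ℝ (⊤ : ℕ∞) f)
    (hpos : ∀ t : ℝ, 0 < f t)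
    (hmono : StrictMono f)
    (hconv : ConvexOn ℝ Set.univ f)
    (hf0 : f 0 = 1)
    (hsuper : Filter.Tendsto (fun t => f t / t) Filter.atTop Filter.atTop)
    (hlogconv : ConvexOn ℝ Set.univ (fun t => Real.log (f t))) :
    ∀ ε : ℝ, 0 < ε → ∃ μ : ℝ, 0 < μ ∧ μ < 1 ∧
      ∀ t : ℝ, 0 ≤ t → f t + ε / 2 ≤ μ ^ 2 * (f (t / μ) + ε) := by
  intro ε hε
  have hC : 0 < Real.exp 2 := Real.exp_pos 2
  set C := Real.exp 2 with hCdef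
  have hpos_m : 0 < (ε / 2 + C) / (ε + C) := by positivity
  obtain ⟨μ, hμ, hμsq⟩ : ∃ μ : ℝ, 0 < μ ∧ μ ^ 2 = (ε / 2 + C) / (ε + C) :=
    ⟨√((ε / 2 + C) / (ε + C)), Real.sqrt_pos.2 hpos_m, Real.sq_sqrt hpos_m.le⟩
  have hkey : μ ^ 2 * (ε + C) = ε / 2 + C := by
    rw [hμsq]
    field_simp
  have hμ1 : μ < 1 := by
    by_contra! h
    have : 1 ≤ μ ^ 2 := one_le_pow₀ h
    nlinarith
  refine ⟨μ, hμ, hμ1, fun t ht => ?_⟩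
  have hsq1 : μ ^ 2 < 1 := pow_lt_one₀ hμ.le hμ1 two_ne_zero
  rcases le_total 2 (Real.log (f t)) with hx | hx
  · have hlog : Real.log (f t) / μ ≤ Real.log (f (t / μ)) := by
      have h := hlogconv.2 (Set.mem_univ (t / μ)) (Set.mem_univ 0) hμ.le
        (sub_nonneg.2 hμ1.le) (by ring)
      have hμt : μ * (t / μ) = t := by field_simp
      simp only [smul_eq_mul, mul_zero, add_zero, hf0, Real.log_one, hμt] at h
      rw [div_le_iff₀ hμ]
      linarith
    have h1 := exp_le_sq_mul_exp_div hμ hμ1 hx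
    have h2 : Real.exp (Real.log (f t) / μ) ≤ f (t / μ) := by
      rw [← Real.exp_log (hpos (t / μ))]
      exact Real.exp_le_exp.2 hlog
    rw [Real.exp_log (hpos t)] at h1
    have h3 := mul_le_mul_of_nonneg_left h2 (sq_nonneg μ)
    -- `hkey` gives `ε * μ² = ε / 2 + (1 - μ²) * C`
    nlinarith
  · have hfC : f t ≤ C := (Real.log_le_iff_le_exp (hpos t)).1 hx
    have hle : f t ≤ f (t / μ) := by
      apply hmono.monotone
      rw [le_div_iff₀ hμ]
      nlinarith
    have h3 := mul_le_mul_of_nonneg_left hle (sq_nonneg μ)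
    have h4 := mul_le_mul_of_nonneg_left hfC (sub_nonneg.2 hsq1.le)
    linarith
end

section
/- Let f : ℝ → ℝ satisfy condition (R) and be log convex. Then for every μ with 0 < μ < 1 and every real number N ≥ 1 there exists k ≥ 0 such that N · f(t) ≤ f(t/μ) + k for all t ≥ 0. -/
/-!
Log convexity together with `log (f 0) = 0` gives `log (f t) ≤ μ * log (f (t / μ))`, that is
`f t ≤ y ^ μ` with `y = f (t / μ)`. Put `k = N ^ (1 / (1 - μ))`. The weighted AM-GM inequality
then yields `N * y ^ μ = y ^ μ * k ^ (1 - μ) ≤ μ * y + (1 - μ) * k ≤ y + k`.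
-/

/-- Condition (R): `f` is smooth, positive on all of `ℝ`, increasing, convex,
`f 0 = 1`, and superlinear at `∞`.  If in addition `f` is log convex, then for
every `0 < μ < 1` and every real `N ≥ 1` there exists `k ≥ 0` such that
`N * f t ≤ f (t/μ) + k` for all `t ≥ 0`. -/
theorem stmt_1 (f : ℝ → ℝ)
    (hsmooth : ContDiff ℝ (⊤ : ℕ∞) f)
    (hpos : ∀ t : ℝ, 0 < f t)
    (hmono : StrictMono f)
    (hconv : ConvexOn ℝ Set.univ f)
    (hf0 : f 0 = 1)
    (hsuper : Filter.Tendsto (fun t => f t / t) Filter.atTop Filter.atTop)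
    (hlogconv : ConvexOn ℝ Set.univ (fun t => Real.log (f t))) :
    ∀ μ : ℝ, 0 < μ → μ < 1 → ∀ N : ℝ, 1 ≤ N → ∃ k : ℝ, 0 ≤ k ∧
      ∀ t : ℝ, 0 ≤ t → N * f t ≤ f (t / μ) + k := by
  intro μ hμ0 hμ1 N hN
  have hN0 : 0 ≤ N := by linarith
  have hk : 0 ≤ N ^ (1 / (1 - μ)) := Real.rpow_nonneg hN0 _
  refine ⟨N ^ (1 / (1 - μ)), hk, fun t _ => ?_⟩
  have hy := hpos (t / μ)
  have hlog : Real.log (f t) ≤ μ * Real.log (f (t / μ)) := by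
    -- `t` is the convex combination `μ * (t / μ) + (1 - μ) * 0`.
    have h := hlogconv.2 (Set.mem_univ (t / μ)) (Set.mem_univ 0) hμ0.le
      (sub_nonneg.2 hμ1.le) (by ring)
    simpa [hf0, mul_div_cancel₀ t hμ0.ne', hμ0.ne', mul_div_cancel_left₀] using h
  have hft : f t ≤ f (t / μ) ^ μ := by
    rw [← Real.log_le_log_iff (hpos t) (Real.rpow_pos_of_pos hy μ), Real.log_rpow hy]
    exact hlog
  have hamgm := Real.geom_mean_le_arith_mean2_weighted hμ0.le (sub_nonneg.2 hμ1.le)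
    hy.le hk (by ring)
  have hkN : (N ^ (1 / (1 - μ))) ^ (1 - μ) = N := by
    rw [← Real.rpow_mul hN0, one_div_mul_cancel (sub_pos.2 hμ1).ne', Real.rpow_one]
  rw [hkN] at hamgm
  have hmul := mul_le_mul_of_nonneg_left hft hN0
  nlinarith [mul_nonneg hμ0.le hk, mul_nonneg (sub_nonneg.2 hμ1.le) hy.le]
end

section
/- Let f : ℝ → ℝ satisfy condition (R) and be log convex, and set F(t) := ∫₀ᵗ f(τ) dτ. Then t·f(t)/F(t) → ∞ as t → ∞. -/
/-!
Since `log f` is convex and vanishes at `0`, it lies below its chord on `[0, t]`: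
`f τ ≤ exp (τ * L / t)` with `L = log (f t)`. Integrating gives
`F t ≤ t * (f t - 1) / L ≤ t * f t / L`, so `t * f t / F t ≥ log (f t)`, which tends to `∞`
because `f` is superlinear.
-/

/-- Condition (R): `f` is smooth, positive on all of `ℝ`, increasing, convex,
`f 0 = 1`, and superlinear at `∞`.  If in addition `f` is log convex and
`F t = ∫ τ in (0)..t, f τ`, then `t * f t / F t → ∞` as `t → ∞`. -/
theorem stmt_2 (f : ℝ → ℝ)
    (hsmooth : ContDiff ℝ (⊤ : ℕ∞) f)
    (hpos : ∀ t : ℝ, 0 < f t)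
    (hmono : StrictMono f)
    (hconv : ConvexOn ℝ Set.univ f)
    (hf0 : f 0 = 1)
    (hsuper : Filter.Tendsto (fun t => f t / t) Filter.atTop Filter.atTop)
    (hlogconv : ConvexOn ℝ Set.univ (fun t => Real.log (f t))) :
    Filter.Tendsto (fun t : ℝ => t * f t / ∫ τ in (0:ℝ)..t, f τ)
      Filter.atTop Filter.atTop := by
  have hlog : Filter.Tendsto (fun t => Real.log (f t)) Filter.atTop Filter.atTop := by
    refine Real.tendsto_log_atTop.comp ?_
    refine (hsuper.atTop_mul_atTop₀ Filter.tendsto_id).congr' ?_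
    filter_upwards [Filter.eventually_gt_atTop 0] with t ht
    exact div_mul_cancel₀ _ ht.ne'
  refine Filter.tendsto_atTop_mono' _ ?_ hlog
  filter_upwards [Filter.eventually_gt_atTop 0] with t ht
  have hL : 0 < Real.log (f t) := Real.log_pos (hf0 ▸ hmono ht)
  have hfi : IntervalIntegrable f MeasureTheory.volume 0 t :=
    hsmooth.continuous.intervalIntegrable _ _
  have hF : 0 < ∫ τ in (0:ℝ)..t, f τ :=
    intervalIntegral.intervalIntegral_pos_of_pos hfi hpos ht
  have hc : 0 < Real.log (f t) / t := div_pos hL ht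
  -- the chord bound for `log f` on `[0, t]`, exponentiated
  have hbound : ∀ τ ∈ Set.Icc 0 t, f τ ≤ Real.exp (Real.log (f t) / t * τ) := by
    intro τ hτ
    rw [← Real.log_le_iff_le_exp (hpos τ)]
    have h := hlogconv.2 (Set.mem_univ 0) (Set.mem_univ t)
      (sub_nonneg.2 ((div_le_one ht).2 hτ.2)) (div_nonneg hτ.1 ht.le) (sub_add_cancel 1 (τ / t))
    simp only [smul_eq_mul, mul_zero, zero_add, hf0, Real.log_one, div_mul_cancel₀ _ ht.ne'] at h
    exact h.trans_eq (by ring)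
  have hint : ∫ τ in (0:ℝ)..t, Real.exp (Real.log (f t) / t * τ)
      = t / Real.log (f t) * (f t - 1) := by
    rw [intervalIntegral.integral_comp_mul_left (fun x => Real.exp x) hc.ne', integral_exp,
      div_mul_cancel₀ _ ht.ne', Real.exp_log (hpos t), mul_zero, Real.exp_zero, inv_div,
      smul_eq_mul]
  have hle : ∫ τ in (0:ℝ)..t, f τ ≤ t / Real.log (f t) * (f t - 1) :=
    hint ▸ intervalIntegral.integral_mono_on ht.le hfi
      (Continuous.intervalIntegrable (by fun_prop) _ _) hbound
  rw [le_div_iff₀ hF]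
  calc Real.log (f t) * ∫ τ in (0:ℝ)..t, f τ
      ≤ Real.log (f t) * (t / Real.log (f t) * (f t - 1)) :=
        mul_le_mul_of_nonneg_left hle hL.le
    _ = t * (f t - 1) := by field_simp
    _ ≤ t * f t := by nlinarith
end

section
/- Let f : ℝ → ℝ satisfy condition (R) and be log convex. Then t·f'(t)/f(t) → ∞ as t → ∞, where f' denotes the derivative of f. -/
/-!
The function `g = log f` is convex with `g 0 = 0`, so its tangent slope at `t > 0` is at least
the slope of its chord over `[0, t]`: `t * f' t / f t = t * g' t ≥ g t = log (f t)`. Superlinearity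
makes `f t`, hence `log (f t)`, tend to `∞`.
-/

/-- Condition (R): `f` is smooth, positive on all of `ℝ`, increasing, convex,
`f 0 = 1`, and superlinear at `∞`.  If in addition `f` is log convex, then
`t * f' t / f t → ∞` as `t → ∞`. -/
theorem stmt_3 (f : ℝ → ℝ)
    (hsmooth : ContDiff ℝ (⊤ : ℕ∞) f)
    (hpos : ∀ t : ℝ, 0 < f t)
    (hmono : StrictMono f)
    (hconv : ConvexOn ℝ Set.univ f)
    (hf0 : f 0 = 1)
    (hsuper : Filter.Tendsto (fun t => f t / t) Filter.atTop Filter.atTop)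
    (hlogconv : ConvexOn ℝ Set.univ (fun t => Real.log (f t))) :
    Filter.Tendsto (fun t : ℝ => t * deriv f t / f t)
      Filter.atTop Filter.atTop := by
  -- `log f` dominates `log t` for large `t`, because `f t / t ≥ 1` eventually.
  have hlog : Filter.Tendsto (fun t => Real.log (f t)) Filter.atTop Filter.atTop := by
    apply Real.tendsto_log_atTop.comp
    refine Filter.tendsto_atTop_mono' _ ?_ Filter.tendsto_id
    filter_upwards [hsuper.eventually_ge_atTop 1, Filter.eventually_gt_atTop 0] with t ht h0
    rw [le_div_iff₀ h0] at ht
    simpa using ht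
  refine Filter.tendsto_atTop_mono' _ ?_ hlog
  filter_upwards [Filter.eventually_gt_atTop 0] with t ht
  have hd : HasDerivAt (fun t => Real.log (f t)) (deriv f t / f t) t :=
    ((hsmooth.differentiable (by simp)) t).hasDerivAt.log (hpos t).ne'
  -- The chord of `log f` over `[0, t]` has slope `log (f t) / t`, as `log (f 0) = 0`.
  have h := hlogconv.slope_le_of_hasDerivAt (Set.mem_univ 0) (Set.mem_univ t) ht hd
  rw [slope_def_field, hf0, Real.log_one, sub_zero, sub_zero, div_le_iff₀ ht] at h
  calc Real.log (f t) ≤ deriv f t / f t * t := h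
    _ = t * deriv f t / f t := by ring
end

section
/- Let f : ℝ → ℝ satisfy condition (S) and set F(t) := ∫₀ᵗ f(τ) dτ. Then f(t)/F(t) → ∞ as t → 1 from the left. -/
/-!
For `0 < s < t < 1`, splitting the
integral at `s` and bounding `f` on each piece by its value at the right endpoint gives
`F t ≤ f s + (1 - s) * f t`. Fix `s = 1 - ε`; as `t → 1⁻` the blow-up of `f` eventually gives
`f s ≤ ε * f t`, hence `F t ≤ 2 * ε * f t`, and `ε` is arbitrary.
-/

/-- Condition (S): `f` is positive, smooth, increasing and convex on `(-∞, 1)`,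
`f 0 = 1`, and `f t → ∞` as `t → 1⁻`.  With `F t = ∫ τ in (0)..t, f τ`,
one has `f t / F t → ∞` as `t → 1⁻`. -/
theorem stmt_4 (f : ℝ → ℝ)
    (hpos : ∀ t ∈ Set.Iio (1:ℝ), 0 < f t)
    (hsmooth : ContDiffOn ℝ (⊤ : ℕ∞) f (Set.Iio 1))
    (hmono : StrictMonoOn f (Set.Iio 1))
    (hconv : ConvexOn ℝ (Set.Iio 1) f)
    (hf0 : f 0 = 1)
    (hblow : Filter.Tendsto f (nhdsWithin 1 (Set.Iio 1)) Filter.atTop) :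
    Filter.Tendsto (fun t : ℝ => f t / ∫ τ in (0:ℝ)..t, f τ)
      (nhdsWithin 1 (Set.Iio 1)) Filter.atTop := by
  have hint : ∀ a b : ℝ, a ≤ b → b < 1 → IntervalIntegrable f MeasureTheory.volume a b := by
    intro a b hab hb
    refine (hmono.monotoneOn.mono fun x hx => ?_).intervalIntegrable
    rw [Set.uIcc_of_le hab] at hx
    exact lt_of_le_of_lt hx.2 hb
  have hbound : ∀ a b : ℝ, a ≤ b → b < 1 → ∫ τ in a..b, f τ ≤ (b - a) * f b := by
    intro a b hab hb
    have h := intervalIntegral.integral_mono_on hab (hint a b hab hb)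
      (intervalIntegrable_const (c := f b))
      fun x hx => hmono.monotoneOn (lt_of_le_of_lt hx.2 hb : x < 1) hb hx.2
    simpa using h
  rw [Filter.tendsto_atTop]
  intro M
  -- With `2 * ε * K = 1` and `M ≤ K`, the bound `F t ≤ 2 * ε * f t` yields `M ≤ f t / F t`.
  obtain ⟨K, hK, hMK⟩ : ∃ K : ℝ, 1 ≤ K ∧ M ≤ K := ⟨max 1 M, le_max_left _ _, le_max_right _ _⟩
  obtain ⟨ε, hε, hε1, hεK⟩ : ∃ ε : ℝ, 0 < ε ∧ ε < 1 ∧ 2 * ε * K = 1 := by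
    refine ⟨1 / (2 * K), by positivity, ?_, by field_simp⟩
    rw [div_lt_one (by positivity)]
    linarith
  have hnear : Set.Ioo (1 - ε) 1 ∈ nhdsWithin (1 : ℝ) (Set.Iio 1) :=
    Ioo_mem_nhdsLT (by linarith)
  filter_upwards [hnear, hblow.eventually_ge_atTop (f (1 - ε) / ε)] with t ht hft
  have hs : 1 - ε < 1 := by linarith
  have hFpos : 0 < ∫ τ in (0:ℝ)..t, f τ :=
    intervalIntegral.intervalIntegral_pos_of_pos_on (hint 0 t (by linarith [ht.1]) ht.2)
      (fun x hx => hpos x (hx.2.trans ht.2)) (by linarith [ht.1])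
  have hsplit := intervalIntegral.integral_add_adjacent_intervals
    (hint 0 (1 - ε) (by linarith) hs) (hint (1 - ε) t ht.1.le ht.2)
  have h1 := hbound 0 (1 - ε) (by linarith) hs
  have h2 := hbound (1 - ε) t ht.1.le ht.2
  have hfs := hpos (1 - ε) hs
  have hftpos := hpos t ht.2
  rw [div_le_iff₀ hε] at hft
  have hF : ∫ τ in (0:ℝ)..t, f τ ≤ 2 * ε * f t := by
    nlinarith [mul_pos hε hfs, mul_pos (sub_pos.2 ht.2) hftpos]
  rw [le_div_iff₀ hFpos]
  calc M * ∫ τ in (0:ℝ)..t, f τ ≤ K * ∫ τ in (0:ℝ)..t, f τ := by gcongr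
    _ ≤ K * (2 * ε * f t) := by gcongr
    _ = f t := by linear_combination f t * hεK
end

section
/- Let f : ℝ → ℝ satisfy condition (S). Then for every ε > 0 there exists μ with 0 < μ < 1 such that μ · ( f(t/μ) + ε ) ≥ f(t) + ε/2 for all t with 0 ≤ t < μ. -/
/-!
Convexity at `t = μ * (t / μ) + (1 - μ) * 0` together with `f 0 = 1` gives
`f t ≤ μ * f (t / μ) + (1 - μ)`, so any `μ` with `μ * ε - (1 - μ) ≥ ε / 2` works.
-/

/-- Condition (S): `f` is positive, smooth, increasing and convex on `(-∞, 1)`,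
`f 0 = 1`, and `f t → ∞` as `t → 1⁻`.  Then for every `ε > 0` there exists
`0 < μ < 1` such that `μ * (f (t/μ) + ε) ≥ f t + ε/2` for all `0 ≤ t < μ`. -/
theorem stmt_6 (f : ℝ → ℝ)
    (hpos : ∀ t ∈ Set.Iio (1:ℝ), 0 < f t)
    (hsmooth : ContDiffOn ℝ (⊤ : ℕ∞) f (Set.Iio 1))
    (hmono : StrictMonoOn f (Set.Iio 1))
    (hconv : ConvexOn ℝ (Set.Iio 1) f)
    (hf0 : f 0 = 1)
    (hblow : Filter.Tendsto f (nhdsWithin 1 (Set.Iio 1)) Filter.atTop) :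
    ∀ ε : ℝ, 0 < ε → ∃ μ : ℝ, 0 < μ ∧ μ < 1 ∧
      ∀ t : ℝ, 0 ≤ t → t < μ → f t + ε / 2 ≤ μ * (f (t / μ) + ε) := by
  intro ε hε
  -- This `μ` solves `μ * ε - (1 - μ) = ε / 2`.
  refine ⟨(1 + ε / 2) / (1 + ε), by positivity, ?_, ?_⟩
  · rw [div_lt_one (by positivity)]
    linarith
  intro t _ ht
  have hμ0 : 0 < (1 + ε / 2) / (1 + ε) := by positivity
  have hμ1 : (1 + ε / 2) / (1 + ε) < 1 := by
    rw [div_lt_one (by positivity)]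
    linarith
  have hμ : (1 + ε / 2) / (1 + ε) * (1 + ε) = 1 + ε / 2 := by field_simp
  generalize (1 + ε / 2) / (1 + ε) = μ at *
  have h1 : t / μ ∈ Set.Iio (1 : ℝ) := (div_lt_one hμ0).2 ht
  have h0 : (0 : ℝ) ∈ Set.Iio (1 : ℝ) := by simp
  have h := hconv.2 h1 h0 hμ0.le (sub_nonneg.2 hμ1.le) (by ring)
  simp only [smul_eq_mul, mul_zero, add_zero, mul_div_cancel₀ t hμ0.ne', hf0, mul_one] at h
  linarith
end

section
/- Let f : ℝ → ℝ satisfy condition (R) and be log convex. Then f is strictly convex on ℝ. -/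
/-- Condition (R): `f` is smooth, positive on all of `ℝ`, increasing, convex,
`f 0 = 1`, and superlinear at `∞`.  If in addition `f` is log convex, then `f`
is strictly convex on `ℝ`. -/
theorem stmt_7 (f : ℝ → ℝ)
    (hsmooth : ContDiff ℝ (⊤ : ℕ∞) f)
    (hpos : ∀ t : ℝ, 0 < f t)
    (hmono : StrictMono f)
    (hconv : ConvexOn ℝ Set.univ f)
    (hf0 : f 0 = 1)
    (hsuper : Filter.Tendsto (fun t => f t / t) Filter.atTop Filter.atTop)
    (hlogconv : ConvexOn ℝ Set.univ (fun t => Real.log (f t))) :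
    StrictConvexOn ℝ Set.univ f := by
  -- Write `f = exp ∘ log f`: since `log f` is convex and injective (as `f` is strictly
  -- increasing), strictness comes from the strict convexity of `exp` at `log (f x) ≠ log (f y)`.
  refine ⟨convex_univ, fun x _ y _ hxy a b ha hb hab => ?_⟩
  have hne : Real.log (f x) ≠ Real.log (f y) := fun h =>
    hxy (hmono.injective (Real.log_injOn_pos (hpos x) (hpos y) h))
  have hlog := hlogconv.2 (Set.mem_univ x) (Set.mem_univ y) ha.le hb.le hab
  have hexp := strictConvexOn_exp.2 (Set.mem_univ _) (Set.mem_univ _) hne ha hb hab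
  rw [Real.exp_log (hpos x), Real.exp_log (hpos y)] at hexp
  calc f (a • x + b • y) = Real.exp (Real.log (f (a • x + b • y))) :=
        (Real.exp_log (hpos _)).symm
    _ ≤ Real.exp (a • Real.log (f x) + b • Real.log (f y)) := Real.exp_le_exp.mpr hlog
    _ < a • f x + b • f y := hexp
end

section
/- For every constant C > 0 there exists λ₀ > 0 such that for all λ with 0 < λ ≤ λ₀ and all s > 0, one has s²/λ + (e^s − 1)·s − C·(e^s − s − 1) > 0. -/
/-!
Take `λ₀ = 1 / (C e^C)`. For `s ≥ C` the term `(e^s - 1) s` alone beats `C (e^s - s - 1)`.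
For `0 < s < C`, the bound `e^s - 1 ≤ s e^s` gives `e^s - s - 1 ≤ s² e^s ≤ s² e^C`, so
`s² / λ ≥ C e^C s²` absorbs the negative term and `(e^s - 1) s > 0` makes the inequality strict.
-/

/-- For every `C > 0` there exists `λ₀ > 0` such that for all `0 < λ ≤ λ₀` and
all `s > 0`, `s²/λ + (e^s − 1)·s − C·(e^s − s − 1) > 0`. -/
theorem stmt_9 :
    ∀ C : ℝ, 0 < C → ∃ lam₀ : ℝ, 0 < lam₀ ∧
      ∀ lam : ℝ, 0 < lam → lam ≤ lam₀ → ∀ s : ℝ, 0 < s →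
        0 < s ^ 2 / lam + (Real.exp s - 1) * s - C * (Real.exp s - s - 1) := by
  intro C hC
  refine ⟨1 / (C * Real.exp C), by positivity, ?_⟩
  intro lam hlam hle s hs
  have hexp : 0 < Real.exp s - 1 := by linarith [Real.add_one_lt_exp hs.ne']
  have hpos : 0 < (Real.exp s - 1) * s := mul_pos hexp hs
  rcases le_or_gt C s with h | h
  · have h1 : 0 < s ^ 2 / lam := by positivity
    have h2 : (Real.exp s - 1) * C ≤ (Real.exp s - 1) * s :=
      mul_le_mul_of_nonneg_left h hexp.le
    have h3 : 0 < C * s := mul_pos hC hs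
    linarith
  · have h1 : C * Real.exp C ≤ 1 / lam := (le_one_div hlam (by positivity)).mp hle
    have h2 : C * Real.exp C * s ^ 2 ≤ s ^ 2 / lam := by
      calc C * Real.exp C * s ^ 2 ≤ 1 / lam * s ^ 2 := by gcongr
        _ = s ^ 2 / lam := by ring
    -- multiply `1 - s ≤ e^{-s}` by `e^s`
    have h3 : Real.exp s - 1 ≤ s * Real.exp s := by
      have h4 := mul_le_mul_of_nonneg_right (Real.add_one_le_exp (-s)) (Real.exp_pos s).le
      rw [← Real.exp_add, neg_add_cancel, Real.exp_zero] at h4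
      linarith
    have h4 : Real.exp s - s - 1 ≤ s ^ 2 * Real.exp C := by
      calc Real.exp s - s - 1 ≤ s * (Real.exp s - 1) := by linarith
        _ ≤ s * (s * Real.exp s) := by gcongr
        _ ≤ s * (s * Real.exp C) := by gcongr
        _ = s ^ 2 * Real.exp C := by ring
    have h5 := mul_le_mul_of_nonneg_left h4 hC.le
    linarith
end
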